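/- arXiv:2009.08527 — 2 statements merged into one kernel-verified Lean document; each statement's English description precedes it below -/
import Mathlib

section
/- The K-algebra homomorphism φ from the free associative K-algebra on the four generators x_{11}, x_{12}, x_{21}, x_{22} to 𝒜 = F/I, sending each generator to the class of the corresponding generator of F, is injective. -/
namespace NCP

/-- The free associative `K`-algebra on the four generators `x_{ij}`. -/
abbrev FreeX (K : Type) [Field K] : Type := FreeAlgebra K (Fin 2 × Fin 2)

/-- The free associative `K`-algebra on the eight generators `x_{ij}, z_{ij}`. -/
abbrev Free8 (K : Type) [Field K] : Type := FreeAlgebra K ((Fin 2 × Fin 2) ⊕ (Fin 2 × Fin 2))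

/-- The generator `x_{ij}` of `Free8 K`. -/
def xg (K : Type) [Field K] (p : Fin 2 × Fin 2) : Free8 K := FreeAlgebra.ι K (Sum.inl p)

/-- The generator `z_{ij}` of `Free8 K`. -/
def zg (K : Type) [Field K] (p : Fin 2 × Fin 2) : Free8 K := FreeAlgebra.ι K (Sum.inr p)

/-- The relations `𝔛𝔷 = I₂` and `𝔷𝔛 = I₂` (entrywise); quotienting `Free8 K` by
the congruence they generate is the same as quotienting by the two-sided ideal
generated by the corresponding differences. -/
inductive ExRel (K : Type) [Field K] : Free8 K → Free8 K → Prop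
  | xz (i j : Fin 2) :
      ExRel K (∑ k : Fin 2, xg K (i, k) * zg K (k, j)) (if i = j then 1 else 0)
  | zx (i j : Fin 2) :
      ExRel K (∑ k : Fin 2, zg K (i, k) * xg K (k, j)) (if i = j then 1 else 0)

/-- The algebra `𝒜 = F / I`. -/
abbrev AlgA (K : Type) [Field K] : Type := RingQuot (ExRel K)

/-- The canonical map `φ` from the free algebra on the `x_{ij}` to `𝒜`. -/
noncomputable def phi (K : Type) [Field K] : FreeX K →ₐ[K] AlgA K :=
  FreeAlgebra.lift K (fun p => RingQuot.mkAlgHom K (ExRel K) (xg K p))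

end NCP

/-!
Send the generic matrix `𝔛` to `1 - t 𝔛`, where `t` is a central indeterminate. Over formal power
series in `t` this matrix is invertible, with inverse the geometric series `∑ tᵏ 𝔛ᵏ`, so the
substitution factors through `φ`. Its values are polynomials in `t`, and setting `t = 1` and
replacing `𝔛` by `1 - 𝔛` undoes it; hence the substitution, and with it `φ`, is injective.
-/

namespace NCP

section Substitution

variable {R σ : Type*} [CommRing R]

/-- The substitution `x ↦ c x - x t` from the free algebra to polynomials in the central
variable `t` over it. The matrix argument uses it with `c` the entries of the identity matrix. -/
noncomputable def polySubst (c : σ → R) : FreeAlgebra R σ →ₐ[R] Polynomial (FreeAlgebra R σ) :=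
  FreeAlgebra.lift R fun x ↦
    algebraMap R _ (c x) - Polynomial.C (FreeAlgebra.ι R x) * Polynomial.X

/-- The inverse substitution on the image of `polySubst c`: `t ↦ 1` and `x ↦ c x - x`. -/
noncomputable def evalSubst (c : σ → R) : Polynomial (FreeAlgebra R σ) →ₐ[R] FreeAlgebra R σ :=
  Polynomial.eval₂AlgHom
    (FreeAlgebra.lift R fun x ↦ algebraMap R _ (c x) - FreeAlgebra.ι R x) 1
    fun _ ↦ Commute.one_right _

lemma evalSubst_comp_polySubst (c : σ → R) :
    (evalSubst c).comp (polySubst c) = AlgHom.id R (FreeAlgebra R σ) := by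
  ext x
  simp [evalSubst, polySubst]

lemma polySubst_injective (c : σ → R) : Function.Injective (polySubst c) :=
  Function.LeftInverse.injective (DFunLike.congr_fun (evalSubst_comp_polySubst c))

/-- The inclusion of polynomials into power series as an algebra homomorphism, for coefficients in
a possibly noncommutative algebra. -/
noncomputable def polyToPowerSeries (R A : Type*) [CommSemiring R] [Semiring A] [Algebra R A] :
    Polynomial A →ₐ[R] PowerSeries A :=
  { Polynomial.coeToPowerSeries.ringHom with
    commutes' r :=
      (Polynomial.coe_C (algebraMap R A r)).trans PowerSeries.algebraMap_apply.symm }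

/-- The substitution `x ↦ c x - x t` with values in power series in the central variable `t`. -/
noncomputable def powerSeriesSubst (c : σ → R) :
    FreeAlgebra R σ →ₐ[R] PowerSeries (FreeAlgebra R σ) :=
  (polyToPowerSeries R (FreeAlgebra R σ)).comp (polySubst c)

lemma powerSeriesSubst_ι (c : σ → R) (x : σ) :
    powerSeriesSubst c (FreeAlgebra.ι R x) =
      algebraMap R _ (c x) - PowerSeries.C (FreeAlgebra.ι R x) * PowerSeries.X := by
  have hC (a : FreeAlgebra R σ) :
      polyToPowerSeries R _ (Polynomial.C a) = PowerSeries.C a := Polynomial.coe_C a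
  have hX : polyToPowerSeries R (FreeAlgebra R σ) Polynomial.X = PowerSeries.X := Polynomial.coe_X
  rw [powerSeriesSubst, AlgHom.comp_apply, polySubst, FreeAlgebra.lift_ι_apply, map_sub, map_mul,
    AlgHom.commutes, hC, hX]

lemma powerSeriesSubst_injective (c : σ → R) : Function.Injective (powerSeriesSubst c) :=
  (Polynomial.coe_injective (FreeAlgebra R σ)).comp (polySubst_injective c)

end Substitution

section GeometricSeries

variable {A n : Type*}

/-- The matrix `M t` of power series in the central variable `t`. -/
noncomputable def mulX [Semiring A] (M : Matrix n n A) : Matrix n n (PowerSeries A) :=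
  M.map fun a ↦ PowerSeries.C a * PowerSeries.X

variable [DecidableEq n]

lemma coeff_matrix_one_apply [Semiring A] (i j : n) (k : ℕ) :
    PowerSeries.coeff k ((1 : Matrix n n (PowerSeries A)) i j) =
      if k = 0 then (1 : Matrix n n A) i j else 0 := by
  by_cases h : i = j <;> simp [Matrix.one_apply, h, PowerSeries.coeff_one]

variable [Fintype n]

/-- The geometric series `∑ Mᵏ tᵏ` of a square matrix, as a matrix of power series in `t`; it is
the inverse of `1 - M t`. -/
def geomSeries [Semiring A] (M : Matrix n n A) : Matrix n n (PowerSeries A) :=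
  Matrix.of fun i j ↦ PowerSeries.mk fun k ↦ (M ^ k) i j

lemma coeff_geomSeries [Semiring A] (M : Matrix n n A) (i j : n) (k : ℕ) :
    PowerSeries.coeff k (geomSeries M i j) = (M ^ k) i j :=
  PowerSeries.coeff_mk k fun k ↦ (M ^ k) i j

lemma geomSeries_eq_one_add_mulX_mul [Semiring A] (M : Matrix n n A) :
    geomSeries M = 1 + mulX M * geomSeries M := by
  ext i j k
  simp only [Matrix.add_apply, map_add, coeff_matrix_one_apply, coeff_geomSeries, mulX,
    Matrix.mul_apply, Matrix.map_apply, mul_assoc, map_sum, PowerSeries.coeff_C_mul]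
  cases k with
  | zero => simp
  | succ k =>
    simp [PowerSeries.coeff_succ_X_mul, coeff_geomSeries, pow_succ' M, Matrix.mul_apply]

lemma geomSeries_eq_one_add_mul_mulX [Semiring A] (M : Matrix n n A) :
    geomSeries M = 1 + geomSeries M * mulX M := by
  ext i j k
  simp only [Matrix.add_apply, map_add, coeff_matrix_one_apply, coeff_geomSeries, mulX,
    Matrix.mul_apply, Matrix.map_apply, ← mul_assoc, map_sum]
  cases k with
  | zero => simp
  | succ k =>
    simp [PowerSeries.coeff_succ_mul_X, coeff_geomSeries, pow_succ M, Matrix.mul_apply]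

/-- The matrix `1 - M t` as a unit of the ring of matrices of power series in `t`. -/
noncomputable def oneSubUnit [Ring A] (M : Matrix n n A) : (Matrix n n (PowerSeries A))ˣ where
  val := 1 - mulX M
  inv := geomSeries M
  val_inv := by
    rw [sub_mul, one_mul, sub_eq_of_eq_add (geomSeries_eq_one_add_mulX_mul M)]
  inv_val := by
    rw [mul_sub, mul_one, sub_eq_of_eq_add (geomSeries_eq_one_add_mul_mulX M)]

end GeometricSeries

section InvertibleMatrix

/-- The matrix of generators `x_{ij}` of the free algebra on `n × n`. -/
def genericMatrix (R n : Type*) [CommSemiring R] : Matrix n n (FreeAlgebra R (n × n)) :=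
  Matrix.of fun i j ↦ FreeAlgebra.ι R (i, j)

variable (R n : Type*) [CommSemiring R] [Fintype n] [DecidableEq n]

/-- The entrywise relations `𝔛 * ℨ = 1` and `ℨ * 𝔛 = 1` for two generic `n × n` matrices, whose
entries are indexed by the left and the right summand respectively. -/
inductive InverseRel :
    FreeAlgebra R ((n × n) ⊕ (n × n)) → FreeAlgebra R ((n × n) ⊕ (n × n)) → Prop
  | mul_inv (i j : n) : InverseRel
      (∑ k, FreeAlgebra.ι R (Sum.inl (i, k)) * FreeAlgebra.ι R (Sum.inr (k, j)))
      (if i = j then 1 else 0)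
  | inv_mul (i j : n) : InverseRel
      (∑ k, FreeAlgebra.ι R (Sum.inr (i, k)) * FreeAlgebra.ι R (Sum.inl (k, j)))
      (if i = j then 1 else 0)

/-- The canonical map from the free algebra on the entries of a generic `n × n` matrix to the
universal algebra in which that matrix is invertible. -/
noncomputable def toInvertible : FreeAlgebra R (n × n) →ₐ[R] RingQuot (InverseRel R n) :=
  FreeAlgebra.lift R fun p ↦ RingQuot.mkAlgHom R (InverseRel R n) (FreeAlgebra.ι R (Sum.inl p))

variable {R n} {B : Type*} [Semiring B] [Algebra R B]

/-- The homomorphism out of the universal algebra classifying an invertible matrix over `B`. -/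
noncomputable def liftUnit (U : (Matrix n n B)ˣ) : RingQuot (InverseRel R n) →ₐ[R] B :=
  RingQuot.liftAlgHom R ⟨FreeAlgebra.lift R
    (Sum.elim (fun p ↦ U.val p.1 p.2) fun p ↦ U⁻¹.val p.1 p.2), by
      rintro _ _ (⟨i, j⟩ | ⟨i, j⟩)
      · simpa [Matrix.mul_apply, Matrix.one_apply, apply_ite] using congr_fun₂ U.mul_inv i j
      · simpa [Matrix.mul_apply, Matrix.one_apply, apply_ite] using congr_fun₂ U.inv_mul i j⟩

lemma liftUnit_toInvertible_ι (U : (Matrix n n B)ˣ) (p : n × n) :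
    liftUnit U (toInvertible R n (FreeAlgebra.ι R p)) = U.val p.1 p.2 := by
  simp [liftUnit, toInvertible]

lemma liftUnit_oneSubUnit_comp_toInvertible (R n : Type*) [CommRing R] [Fintype n]
    [DecidableEq n] :
    (liftUnit (oneSubUnit (genericMatrix R n))).comp (toInvertible R n) =
      powerSeriesSubst fun p ↦ (1 : Matrix n n R) p.1 p.2 := by
  ext p : 2
  have hone : algebraMap R (PowerSeries (FreeAlgebra R (n × n))) ((1 : Matrix n n R) p.1 p.2) =
      (1 : Matrix n n _) p.1 p.2 :=
    congr_fun₂ (Matrix.map_one (algebraMap R _) (map_zero _) (map_one _)) p.1 p.2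
  rw [Function.comp_apply, Function.comp_apply, powerSeriesSubst_ι, hone]
  exact liftUnit_toInvertible_ι _ p

end InvertibleMatrix

lemma exRel_eq_inverseRel (K : Type) [Field K] : ExRel K = InverseRel K (Fin 2) := by
  ext a b
  constructor
  · rintro (⟨i, j⟩ | ⟨i, j⟩)
    exacts [.mul_inv i j, .inv_mul i j]
  · rintro (⟨i, j⟩ | ⟨i, j⟩)
    exacts [.xz i j, .zx i j]

end NCP

open NCP in
theorem statement_17_general (R n : Type*) [CommRing R] [Fintype n] [DecidableEq n] :
    Function.Injective (toInvertible R n) := by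
  refine Function.Injective.of_comp (f := liftUnit (oneSubUnit (genericMatrix R n))) ?_
  rw [← AlgHom.coe_comp, liftUnit_oneSubUnit_comp_toInvertible]
  exact powerSeriesSubst_injective _

open NCP in
/-- The canonical map from the free algebra on the `x_{ij}`
to `𝒜 = F/I` is injective. -/
theorem statement_17 (K : Type) [Field K] : Function.Injective (phi K) := by
  have h := statement_17_general K (Fin 2)
  rwa [toInvertible, ← exRel_eq_inverseRel] at h
end

section
/- For every element f of the free associative K-algebra on the four generators x_{11}, x_{12}, x_{21}, x_{22} that is not a scalar multiple of the identity (f ∉ K·1), the image φ(f) is not a unit of 𝒜 = F/I. -/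
/-
Specialise the generic invertible matrix to a matrix over `R[X]`, where `R` is the monoid algebra
of the free monoid on three letters `a`, `c`, `d`, whose entries are linear in `X` with leading
coefficients the words `acd`, `ac`, `cd`, `c`. These words freely generate a free submonoid, so the
top homogeneous component of a nonscalar `f` survives in the leading coefficient of the value of
`f`. That value therefore has positive degree, whereas the units of `R[X]` have degree zero
because `R` is a domain.

Such a matrix is `P + α c δ X`, where `P = !![a - d, -1; 1, 0]`, `α` is the column `(a, 1)` and
`δ` is the row `(d, 1)`: it is invertible because `P` is and `δ P⁻¹ α = 0`.
-/

namespace NCP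

section FreeMonoid

variable {ι κ M : Type*}

theorem injective_freeMonoidLift_of_head_eq (code : ι → FreeMonoid κ) (hne : ∀ i, code i ≠ 1)
    (hhead : ∀ i j v w,
      code i * FreeMonoid.lift code v = code j * FreeMonoid.lift code w → i = j) :
    Function.Injective (FreeMonoid.lift code) := by
  have hlift_ne (i : ι) (w : FreeMonoid ι) : code i * FreeMonoid.lift code w ≠ 1 :=
    fun h => hne i (eq_one_of_mul_right' h)
  intro v
  induction v using FreeMonoid.inductionOn' with
  | one =>
    intro w h
    cases w using FreeMonoid.casesOn with
    | one => rfl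
    | of_mul j w => exact absurd (by simpa using h.symm) (hlift_ne j w)
  | of_mul i v ih =>
    intro w h
    cases w using FreeMonoid.casesOn with
    | one => exact absurd (by simpa using h) (hlift_ne i v)
    | of_mul j w =>
      rw [map_mul, map_mul, FreeMonoid.lift_eval_of, FreeMonoid.lift_eval_of] at h
      obtain rfl := hhead i j v w h
      rw [ih (mul_left_cancel h)]

theorem linearIndependent_freeMonoidLift_monoidAlgebraOf (K : Type*) [Semiring K] [Monoid M]
    {code : ι → M} (hcode : Function.Injective (FreeMonoid.lift code)) :
    LinearIndependent K (FreeMonoid.lift fun i => MonoidAlgebra.of K M (code i)) := by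
  have hbasis : ⇑(FreeMonoid.lift fun i => MonoidAlgebra.of K M (code i)) =
      MonoidAlgebra.basis M K ∘ FreeMonoid.lift code := by
    ext1 w
    simpa [Function.comp_def] using
      (FreeMonoid.hom_map_lift (MonoidAlgebra.of K M) code w).symm
  rw [hbasis]
  exact (MonoidAlgebra.basis M K).linearIndependent.comp _ hcode

end FreeMonoid

section FreeAlgebra

variable {K ι : Type*} [CommSemiring K]

theorem basisFreeMonoid_apply (w : FreeMonoid ι) :
    FreeAlgebra.basisFreeMonoid K ι w = FreeMonoid.lift (FreeAlgebra.ι K) w := by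
  simp [FreeAlgebra.basisFreeMonoid, FreeAlgebra.equivMonoidAlgebraFreeMonoid]

theorem freeAlgebraLift_eq_linearCombination {A : Type*} [Semiring A] [Algebra K A] (p : ι → A)
    (f : FreeAlgebra K ι) :
    FreeAlgebra.lift K p f =
      Finsupp.linearCombination K (FreeMonoid.lift p)
        ((FreeAlgebra.basisFreeMonoid K ι).repr f) := by
  have hword (w : FreeMonoid ι) :
      FreeAlgebra.lift K p (FreeAlgebra.basisFreeMonoid K ι w) = FreeMonoid.lift p w := by
    rw [basisFreeMonoid_apply, ← AlgHom.coe_toMonoidHom, FreeMonoid.hom_map_lift]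
    congr 2
    ext i
    simp
  conv_lhs => rw [← (FreeAlgebra.basisFreeMonoid K ι).linearCombination_repr f]
  rw [← AlgHom.coe_toLinearMap, Finsupp.apply_linearCombination]
  congr 2
  exact funext hword

theorem exists_mem_support_repr_ne_one {f : FreeAlgebra K ι}
    (hf : f ∉ Set.range (algebraMap K (FreeAlgebra K ι))) :
    ∃ w ∈ ((FreeAlgebra.basisFreeMonoid K ι).repr f).support, w ≠ 1 := by
  by_contra! hsupp
  refine hf ⟨(FreeAlgebra.basisFreeMonoid K ι).repr f 1, ?_⟩
  have hsubset : ((FreeAlgebra.basisFreeMonoid K ι).repr f).support ⊆ {1} := fun w hw =>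
    Finset.mem_singleton.2 (hsupp w hw)
  conv_rhs => rw [← (FreeAlgebra.basisFreeMonoid K ι).linearCombination_repr f,
    Finsupp.support_subset_singleton.1 hsubset]
  simp [basisFreeMonoid_apply, Algebra.algebraMap_eq_smul_one]

end FreeAlgebra

section LinearPolynomials

open Polynomial

variable {K ι R : Type*}

theorem natDegree_freeMonoidLift_le [Semiring R] {p : ι → R[X]} (hp : ∀ i, (p i).natDegree ≤ 1)
    (w : FreeMonoid ι) : (FreeMonoid.lift p w).natDegree ≤ w.length := by
  induction w using FreeMonoid.inductionOn' with
  | one => simp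
  | of_mul i w ih =>
    rw [map_mul, FreeMonoid.lift_eval_of, FreeMonoid.length_mul, FreeMonoid.length_of]
    exact natDegree_mul_le_of_le (hp i) ih

theorem coeff_length_freeMonoidLift [Semiring R] {p : ι → R[X]} (hp : ∀ i, (p i).natDegree ≤ 1)
    (w : FreeMonoid ι) :
    (FreeMonoid.lift p w).coeff w.length = FreeMonoid.lift (fun i => (p i).coeff 1) w := by
  induction w using FreeMonoid.inductionOn' with
  | one => simp
  | of_mul i w ih =>
    rw [map_mul, map_mul, FreeMonoid.lift_eval_of, FreeMonoid.lift_eval_of,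
      FreeMonoid.length_mul, FreeMonoid.length_of,
      coeff_mul_add_eq_of_natDegree_le (hp i) (natDegree_freeMonoidLift_le hp w), ih]

theorem coeff_freeAlgebraLift_eq_linearCombination_filter [CommSemiring K] [Semiring R]
    [Algebra K R] {p : ι → R[X]} (hp : ∀ i, (p i).natDegree ≤ 1) {f : FreeAlgebra K ι} {n : ℕ}
    (hn : ∀ w ∈ ((FreeAlgebra.basisFreeMonoid K ι).repr f).support, w.length ≤ n) :
    (FreeAlgebra.lift K p f).coeff n =
      Finsupp.linearCombination K (FreeMonoid.lift fun i => (p i).coeff 1)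
        (((FreeAlgebra.basisFreeMonoid K ι).repr f).filter (·.length = n)) := by
  rw [freeAlgebraLift_eq_linearCombination, Finsupp.linearCombination_apply,
    Finsupp.linearCombination_apply, Finsupp.sum, finsetSum_coeff, Finsupp.sum,
    Finsupp.support_filter, Finset.sum_filter]
  refine Finset.sum_congr rfl fun w hw => ?_
  rw [coeff_smul]
  split_ifs with hlength
  · rw [Finsupp.filter_apply_pos (fun w : FreeMonoid ι => w.length = n) _ hlength, ← hlength,
      coeff_length_freeMonoidLift hp]
  · have hlt : w.length < n := (hn w hw).lt_of_ne hlength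
    rw [coeff_eq_zero_of_natDegree_lt ((natDegree_freeMonoidLift_le hp w).trans_lt hlt),
      smul_zero]

theorem not_isUnit_freeAlgebraLift_of_linearIndependent [CommSemiring K] [Semiring R]
    [NoZeroDivisors R] [Algebra K R] {p : ι → R[X]} (hp : ∀ i, (p i).natDegree ≤ 1)
    (hlead : LinearIndependent K (FreeMonoid.lift fun i => (p i).coeff 1))
    {f : FreeAlgebra K ι} (hf : f ∉ Set.range (algebraMap K (FreeAlgebra K ι))) :
    ¬ IsUnit (FreeAlgebra.lift K p f) := by
  obtain ⟨v, hv, hv_ne⟩ := exists_mem_support_repr_ne_one hf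
  obtain ⟨w, hw, hmax⟩ := Finset.exists_max_image _ FreeMonoid.length ⟨v, hv⟩
  have hpos : 0 < w.length :=
    (Nat.pos_of_ne_zero (mt FreeMonoid.length_eq_zero.1 hv_ne)).trans_le (hmax v hv)
  intro hunit
  have hcoeff := coeff_freeAlgebraLift_eq_linearCombination_filter hp hmax
  rw [coeff_eq_zero_of_natDegree_lt ((natDegree_eq_zero_of_isUnit hunit).trans_lt hpos)] at hcoeff
  have hcomponent := hlead (hcoeff.symm.trans (map_zero _).symm)
  have hzero := DFunLike.congr_fun hcomponent w
  rw [Finsupp.filter_apply_pos (fun v : FreeMonoid ι => v.length = w.length) _ rfl] at hzero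
  exact Finsupp.mem_support_iff.1 hw hzero

end LinearPolynomials

section Code

/-- The three letters of the alphabet over which the leading coefficients are words. -/
inductive Letter
  | a
  | c
  | d

open Letter

/-- The words `acd`, `ac`, `cd`, `c`, indexed as the entries of the product of the column `(a, 1)`,
the letter `c` and the row `(d, 1)`. -/
def codeword (p : Fin 2 × Fin 2) : FreeMonoid Letter :=
  ![.of a, 1] p.1 * (.of c * ![.of d, 1] p.2)

theorem codeword_ne_one (p : Fin 2 × Fin 2) : codeword p ≠ 1 := fun h =>
  FreeMonoid.of_ne_one c (eq_one_of_mul_right' (eq_one_of_mul_left' h))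

theorem of_d_mul_ne_lift_codeword (v : FreeMonoid Letter) (w : FreeMonoid (Fin 2 × Fin 2)) :
    FreeMonoid.of d * v ≠ FreeMonoid.lift codeword w := by
  intro h
  replace h := congrArg FreeMonoid.toList h
  cases w using FreeMonoid.casesOn with
  | one => simp at h
  | of_mul p w =>
    obtain ⟨i, j⟩ := p
    fin_cases i <;> simp [codeword, mul_assoc] at h

theorem eq_of_codeword_mul_lift_eq (p q : Fin 2 × Fin 2) (v w : FreeMonoid (Fin 2 × Fin 2))
    (h : codeword p * FreeMonoid.lift codeword v = codeword q * FreeMonoid.lift codeword w) :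
    p = q := by
  obtain ⟨i, j⟩ := p
  obtain ⟨k, l⟩ := q
  simp only [codeword, mul_assoc] at h
  have hrow : i = k := by
    replace h := congrArg FreeMonoid.toList h
    fin_cases i <;> fin_cases k <;> simp at h ⊢
  subst hrow
  replace h := mul_left_cancel (mul_left_cancel h)
  -- A letter `d` following the first `c` can only belong to the first codeword.
  have hcol : j = l := by
    fin_cases j <;> fin_cases l
    · rfl
    · exact absurd (by simpa using h) (of_d_mul_ne_lift_codeword (FreeMonoid.lift codeword v) w)
    · exact absurd (by simpa using h.symm)
        (of_d_mul_ne_lift_codeword (FreeMonoid.lift codeword w) v)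
    · rfl
  rw [hcol]

theorem injective_freeMonoidLift_codeword : Function.Injective (FreeMonoid.lift codeword) :=
  injective_freeMonoidLift_of_head_eq codeword codeword_ne_one eq_of_codeword_mul_lift_eq

end Code

section Pencil

open Polynomial Matrix

variable {S : Type*} [Ring S]

theorem isUnit_add_of_mul_inv_mul_eq_zero (p : Sˣ) {m : S} (h : m * ↑p⁻¹ * m = 0) :
    IsUnit (↑p + m) := by
  have hnil : IsNilpotent (↑p⁻¹ * m) := ⟨2, by rw [sq, mul_assoc, ← mul_assoc m, h, mul_zero]⟩
  have hfactor : ↑p + m = ↑p * (1 + ↑p⁻¹ * m) := by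
    rw [mul_add, mul_one, Units.mul_inv_cancel_left]
  rw [hfactor]
  exact p.isUnit.mul hnil.isUnit_one_add

/-- The constant term of `pencil`, bundled with its inverse. -/
def pencilBase (a d : S) : (Matrix (Fin 2) (Fin 2) S)ˣ where
  val := !![a - d, -1; 1, 0]
  inv := !![0, 1; -1, a - d]
  val_inv := by simp [Matrix.one_fin_two]
  inv_val := by simp [Matrix.one_fin_two]

/-- The matrix `P + α c δ`, with `P = pencilBase a d`, `α` the column `(a, 1)` and `δ` the row
`(d, 1)`: an invertible matrix over any ring, affine in `c`. -/
def pencil (a c d : S) : Matrix (Fin 2) (Fin 2) S :=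
  pencilBase a d + vecMulVec ![a, 1] (c • ![d, 1])

theorem row_mul_pencilBase_inv_mul_column (a d : S) :
    ![d, 1] ᵥ* ↑(pencilBase a d)⁻¹ ⬝ᵥ ![a, 1] = 0 := by
  simp [pencilBase]

theorem isUnit_pencil (a c d : S) : IsUnit (pencil a c d) := by
  refine isUnit_add_of_mul_inv_mul_eq_zero (pencilBase a d) ?_
  rw [vecMulVec_mul, vecMulVec_mul_vecMulVec, smul_vecMul, smul_dotProduct,
    row_mul_pencilBase_inv_mul_column, smul_zero, zero_smul, vecMulVec_zero]

theorem pencil_C_apply (a c d : S) (i j : Fin 2) :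
    pencil (C a) (C c * X) (C d) i j =
      C (![a, 1] i * (c * ![d, 1] j)) * X +
        C ((pencilBase a d : Matrix (Fin 2) (Fin 2) S) i j) := by
  fin_cases i <;> fin_cases j <;>
    simp [pencil, pencilBase, mul_assoc, X_mul_C, add_comm]

end Pencil

section WordPencil

open Polynomial

variable (K : Type*) [Ring K]

/-- The pencil at the letters `a`, `c X`, `d`: an invertible matrix of linear polynomials over the
monoid algebra, with leading coefficients the codewords. -/
noncomputable def wordPencil : Matrix (Fin 2) (Fin 2) (MonoidAlgebra K (FreeMonoid Letter))[X] :=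
  pencil (C (.of K _ (.of .a))) (C (.of K _ (.of .c)) * X) (C (.of K _ (.of .d)))

theorem isUnit_wordPencil : IsUnit (wordPencil K) := isUnit_pencil _ _ _

theorem natDegree_wordPencil_apply_le (i j : Fin 2) : (wordPencil K i j).natDegree ≤ 1 := by
  rw [wordPencil, pencil_C_apply]
  exact natDegree_linear_le

theorem coeff_one_wordPencil_apply (i j : Fin 2) :
    (wordPencil K i j).coeff 1 = MonoidAlgebra.of K _ (codeword (i, j)) := by
  rw [wordPencil, pencil_C_apply]
  fin_cases i <;> fin_cases j <;>
    simp [codeword, coeff_C, MonoidAlgebra.single_mul_single, MonoidAlgebra.one_def]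

theorem linearIndependent_coeff_one_wordPencil :
    LinearIndependent K
      (FreeMonoid.lift fun p : Fin 2 × Fin 2 => (wordPencil K p.1 p.2).coeff 1) := by
  simp only [coeff_one_wordPencil_apply]
  exact linearIndependent_freeMonoidLift_monoidAlgebraOf K injective_freeMonoidLift_codeword

end WordPencil

theorem exists_algHom_comp_phi_eq_lift {K : Type} {S : Type*} [Field K] [Ring S] [Algebra K S]
    {x : Matrix (Fin 2) (Fin 2) S} (hx : IsUnit x) :
    ∃ Φ : AlgA K →ₐ[K] S, Φ.comp (phi K) = FreeAlgebra.lift K fun p => x p.1 p.2 := by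
  obtain ⟨z, hxz, hzx⟩ := isUnit_iff_exists.1 hx
  let F : Free8 K →ₐ[K] S :=
    FreeAlgebra.lift K (Sum.elim (fun p => x p.1 p.2) fun p => z p.1 p.2)
  have hF ⦃u v : Free8 K⦄ (huv : ExRel K u v) : F u = F v := by
    rcases huv with ⟨i, j⟩ | ⟨i, j⟩
    · simpa [F, xg, zg, apply_ite F, Matrix.mul_apply, Matrix.one_apply] using congrFun₂ hxz i j
    · simpa [F, xg, zg, apply_ite F, Matrix.mul_apply, Matrix.one_apply] using congrFun₂ hzx i j
  refine ⟨RingQuot.liftAlgHom K ⟨F, hF⟩, ?_⟩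
  ext p
  simp [phi, F, xg]

end NCP

open NCP in
/-- The image under `φ` of any non-scalar element of the free
algebra on the `x_{ij}` is not a unit of `𝒜 = F/I`. -/
theorem statement_18 (K : Type) [Field K] (f : FreeX K)
    (hf : f ∉ Set.range (algebraMap K (FreeX K))) :
    ¬ IsUnit (phi K f) := by
  obtain ⟨Φ, hΦ⟩ := exists_algHom_comp_phi_eq_lift (K := K) (isUnit_wordPencil K)
  have hvalue : ¬ IsUnit (Φ.comp (phi K) f) := by
    rw [hΦ]
    exact not_isUnit_freeAlgebraLift_of_linearIndependent
      (p := fun p : Fin 2 × Fin 2 => wordPencil K p.1 p.2)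
      (fun p => natDegree_wordPencil_apply_le K p.1 p.2)
      (linearIndependent_coeff_one_wordPencil K) hf
  exact fun hunit => hvalue (hunit.map Φ)
end
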